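/- Let N ∈ ℕ and let q, b, t ∈ ℂ satisfy t ≠ 0, (q;q)_N ≠ 0, (t;q)_N ≠ 0 and (bq;q)_N ≠ 0. Then F_N(b/t, 0; t) = (bq;q)_N (q;q)_N / (t;q)_N · Σ_{n=0}^{N} (t;q)_n q^n / ((bq;q)_n (q;q)_n). -/

import Mathlib

/-!
After cancelling the factor `(q;q)_N / (t;q)_N`, the claim reads `L N = R N`, where
`L N = ∑_{n ≤ N} c n * d (N - n)` with `c n = t^n (bq/t;q)_n = ∏_{j<n} (t - b q^{j+1})` and
`d m = (t;q)_m / (q;q)_m`, while `R N = (bq;q)_N ∑_{n ≤ N} (t;q)_n q^n / ((bq;q)_n (q;q)_n)`.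
Clearly `R (N+1) = (1 - b q^{N+1}) R N + d (N+1) q^{N+1}`, so it is enough that `L` satisfies the
same recurrence. This reduces to a telescoping sum: with `m = N - n`,
`t - 1 - b q^{n+1} (1 - q^m) = (t - b q^{n+1}) (1 - q^m) - (1 - t q^m)`,
and `c (n+1) = c n * (t - b q^{n+1})`, `d m * (1 - q^m) = d (m-1) * (1 - t q^{m-1})`.
-/

open Finset

/-- The q-Pochhammer symbol (z; q)_n = prod_{j=0}^{n-1} (1 - z q^j). -/
noncomputable def qPoch (q z : ℂ) (n : ℕ) : ℂ :=
  ∏ j ∈ Finset.range n, (1 - z * q ^ j)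

/-- The Gaussian binomial coefficient [N, n]_q = (q;q)_N / ((q;q)_n (q;q)_{N-n}). -/
noncomputable def qBinom (q : ℂ) (N n : ℕ) : ℂ :=
  qPoch q q N / (qPoch q q n * qPoch q q (N - n))

/-- The finite analogue of Fine's function,
F_N(a, b; t) = sum_{n=0}^{N} [N,n]_q (aq;q)_n (t;q)_{N-n} (q;q)_n t^n / ((bq;q)_n (t;q)_N). -/
noncomputable def fineF (q a b t : ℂ) (N : ℕ) : ℂ :=
  ∑ n ∈ Finset.range (N + 1),
    qBinom q N n * (qPoch q (a * q) n * qPoch q t (N - n) * qPoch q q n * t ^ n) /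
      (qPoch q (b * q) n * qPoch q t N)

lemma qPoch_succ (q z : ℂ) (n : ℕ) : qPoch q z (n + 1) = qPoch q z n * (1 - z * q ^ n) :=
  Finset.prod_range_succ _ _

lemma qPoch_ne_zero_of_le {q z : ℂ} {n N : ℕ} (hn : n ≤ N) (h : qPoch q z N ≠ 0) :
    qPoch q z n ≠ 0 := by
  unfold qPoch at *
  rw [Finset.prod_ne_zero_iff] at *
  intro j hj
  exact h j (Finset.mem_range.2 (lt_of_lt_of_le (Finset.mem_range.1 hj) hn))

lemma pow_mul_qPoch_succ (q b t : ℂ) (ht0 : t ≠ 0) (n : ℕ) :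
    t ^ (n + 1) * qPoch q (b / t * q) (n + 1) =
      t ^ n * qPoch q (b / t * q) n * (t - b * q ^ (n + 1)) := by
  rw [qPoch_succ]
  have h : t * (1 - b / t * q * q ^ n) = t - b * q ^ (n + 1) := by
    field_simp
    ring
  linear_combination t ^ n * qPoch q (b / t * q) n * h

lemma ratio_succ (q t : ℂ) (m : ℕ) (h : qPoch q q (m + 1) ≠ 0) :
    qPoch q t (m + 1) / qPoch q q (m + 1) * (1 - q ^ (m + 1)) =
      qPoch q t m / qPoch q q m * (1 - t * q ^ m) := by
  rw [qPoch_succ q q] at *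
  rw [qPoch_succ, show q ^ (m + 1) = q * q ^ m by ring]
  have h2 := right_ne_zero_of_mul h
  rw [div_mul_eq_mul_div, mul_div_mul_right _ _ h2, div_mul_eq_mul_div]

/-- The telescoping sum, for sequences `c`, `d` known only through their first-order
recurrences. -/
lemma sum_telescope (q b t : ℂ) (c d : ℕ → ℂ) (N : ℕ)
    (hc : ∀ n, c (n + 1) = c n * (t - b * q ^ (n + 1)))
    (hd : ∀ m < N, d (m + 1) * (1 - q ^ (m + 1)) = d m * (1 - t * q ^ m)) :
    ∑ n ∈ Finset.range (N + 1), c n * d (N - n) * (t - 1 - b * q ^ (n + 1) + b * q ^ (N + 1)) =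
      -(c 0 * d N * (1 - t * q ^ N)) := by
  have key : ∀ K ≤ N,
      ∑ n ∈ Finset.range K, c n * d (N - n) * (t - 1 - b * q ^ (n + 1) + b * q ^ (N + 1)) =
        c K * d (N - K) * (1 - t * q ^ (N - K)) - c 0 * d N * (1 - t * q ^ N) := by
    intro K
    induction K with
    | zero => simp
    | succ K ih =>
      intro hK
      obtain ⟨m, rfl⟩ := Nat.exists_eq_add_of_le hK
      rw [Finset.sum_range_succ, ih (by omega), hc K]
      have e1 : K + 1 + m - K = m + 1 := by omega
      have e2 : K + 1 + m - (K + 1) = m := by omega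
      rw [e1, e2]
      have h := hd m (by omega)
      linear_combination (c K * (t - b * q ^ (K + 1))) * h
  rw [Finset.sum_range_succ, key N le_rfl]
  simp only [Nat.sub_self, pow_zero]
  ring

/-- The claimed identity with the common factor `(q;q)_N / (t;q)_N` removed. -/
lemma sum_eq (q b t : ℂ) (ht0 : t ≠ 0) (N : ℕ) (hq : qPoch q q N ≠ 0)
    (hb : qPoch q (b * q) N ≠ 0) :
    ∑ n ∈ Finset.range (N + 1),
        t ^ n * qPoch q (b / t * q) n * (qPoch q t (N - n) / qPoch q q (N - n)) =
      qPoch q (b * q) N * ∑ n ∈ Finset.range (N + 1),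
          qPoch q t n * q ^ n / (qPoch q (b * q) n * qPoch q q n) := by
  induction N with
  | zero => simp [qPoch]
  | succ N ih =>
    have ih := ih (qPoch_ne_zero_of_le N.le_succ hq) (qPoch_ne_zero_of_le N.le_succ hb)
    have tel := sum_telescope q b t (fun n => t ^ n * qPoch q (b / t * q) n)
      (fun m => qPoch q t m / qPoch q q m) N (pow_mul_qPoch_succ q b t ht0)
      (fun m hm => ratio_succ q t m (qPoch_ne_zero_of_le (by omega) hq))
    have hr := ratio_succ q t N hq
    have hlast : qPoch q (b * q) (N + 1) *
        (qPoch q t (N + 1) * q ^ (N + 1) / (qPoch q (b * q) (N + 1) * qPoch q q (N + 1))) =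
        qPoch q t (N + 1) / qPoch q q (N + 1) * q ^ (N + 1) := by
      field_simp
    rw [Finset.sum_range_succ
        (fun n => qPoch q t n * q ^ n / (qPoch q (b * q) n * qPoch q q n)) (N + 1), mul_add, hlast, qPoch_succ q (b * q) N,
      mul_right_comm, ← ih, Finset.sum_range_succ']
    simp only [pow_mul_qPoch_succ q b t ht0, Nat.add_sub_add_right, Nat.sub_zero]
    have h0 : t ^ 0 * qPoch q (b / t * q) 0 = 1 := by simp [qPoch]
    simp only [h0] at tel ⊢
    have split : ∑ n ∈ Finset.range (N + 1), t ^ n * qPoch q (b / t * q) n *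
          (t - b * q ^ (n + 1)) * (qPoch q t (N - n) / qPoch q q (N - n)) =
        ∑ n ∈ Finset.range (N + 1), t ^ n * qPoch q (b / t * q) n *
          (qPoch q t (N - n) / qPoch q q (N - n)) *
            (t - 1 - b * q ^ (n + 1) + b * q ^ (N + 1)) +
        (∑ n ∈ Finset.range (N + 1), t ^ n * qPoch q (b / t * q) n *
          (qPoch q t (N - n) / qPoch q q (N - n))) * (1 - b * q * q ^ N) := by
      rw [Finset.sum_mul, ← Finset.sum_add_distrib]
      refine Finset.sum_congr rfl fun n _ => ?_
      ring
    rw [split, tel]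
    linear_combination hr

theorem fineF_bt_zero_first (N : ℕ) (q b t : ℂ) (ht0 : t ≠ 0)
    (hq : qPoch q q N ≠ 0) (ht : qPoch q t N ≠ 0) (hb : qPoch q (b * q) N ≠ 0) :
    fineF q (b / t) 0 t N =
      qPoch q (b * q) N * qPoch q q N / qPoch q t N *
        ∑ n ∈ Finset.range (N + 1),
          qPoch q t n * q ^ n / (qPoch q (b * q) n * qPoch q q n) := by
  have h := sum_eq q b t ht0 N hq hb
  rw [mul_div_right_comm, mul_right_comm, div_mul_eq_mul_div, ← h, div_mul_eq_mul_div,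
    Finset.sum_mul, Finset.sum_div]
  unfold fineF qBinom
  refine Finset.sum_congr rfl fun n hn => ?_
  have hn' : n ≤ N := by simpa [Nat.lt_succ_iff] using hn
  have h1 := qPoch_ne_zero_of_le hn' hq
  have h2 := qPoch_ne_zero_of_le (Nat.sub_le N n) hq
  have h3 : qPoch q (0 * q) n = 1 := by simp [qPoch]
  rw [h3]
  field_simp
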